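/- Let M=(Q,Γ,Δ,q₀,γ₀) be a DCFS with Γ={γ₀,…,γ_n}, V the VASS constructed from M, and μ the simulation map from configurations of M to configurations of V. If ((q₀,⊥),u₀)→*ς in T(V) via a run labelled by a word τ over Δ, and the state of ς lies in Q×((Γ∪{ε})∪{⊥}) (i.e., is not p_halt), then there is a configuration c of M with μ(c)=ς and c_init^M→*c in T(M) via a run labelled by the same word τ. -/

import Mathlib

namespace DCPSFormal

/-- Rules of a dynamic network of concurrent pushdown systems (DCPS):
creation rules `⟨q,γ⟩ → ⟨q',u⟩ ▷ α` (with `α = none` meaning `ε`),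
interruption rules `⟨q,γ⟩ ↦ ⟨q',u⟩`, and resumption rules `q ↦ q' ◁ γ`. -/
inductive Rule (Q Γ : Type*) where
  | cr : Q → Γ → Q → List Γ → Option Γ → Rule Q Γ
  | intr : Q → Γ → Q → List Γ → Rule Q Γ
  | res : Q → Γ → Q → Rule Q Γ

/-- A DCPS: a set of rules, an initial state and an initial stack symbol. -/
structure DCPS (Q Γ : Type*) where
  rules : Set (Rule Q Γ)
  q0 : Q
  γ0 : Γ

/-- Well-formedness of a DCPS: every pushed word has length at most 2. -/
def IsDCPSWf {Q Γ : Type*} (M : DCPS Q Γ) : Prop :=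
  ∀ r ∈ M.rules,
    match r with
    | .cr _ _ _ u _ => u.length ≤ 2
    | .intr _ _ _ u => u.length ≤ 2
    | .res _ _ _ => True

/-- A DCFS is a DCPS in which every pushed word has length at most 1. -/
def IsDCFS {Q Γ : Type*} (M : DCPS Q Γ) : Prop :=
  ∀ r ∈ M.rules,
    match r with
    | .cr _ _ _ u _ => u.length ≤ 1
    | .intr _ _ _ u => u.length ≤ 1
    | .res _ _ _ => True

/-- A configuration of a DCPS: global state, optional active local configuration
(stack content and switch number), and a finitely supported multiset of pending
local configurations. -/
structure Config (Q Γ : Type*) where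
  state : Q
  active : Option (List Γ × ℕ)
  idle : (List Γ × ℕ) →₀ ℕ

/-- The thread possibly spawned by a creation rule with creation component `α`
when the active thread has switch number `i`. -/
noncomputable def spawnOf {Γ : Type*} (α : Option Γ) (i : ℕ) : (List Γ × ℕ) →₀ ℕ :=
  match α with
  | none => 0
  | some a => Finsupp.single ([a], i + 1) 1

/-- The transition system `T(M)` of a DCPS, with steps labelled by rules. -/
inductive Step {Q Γ : Type*} (M : DCPS Q Γ) : Rule Q Γ → Config Q Γ → Config Q Γ → Prop
  | cr {q γ q' u α w i V} :
      Rule.cr q γ q' u α ∈ M.rules →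
      Step M (.cr q γ q' u α) ⟨q, some (γ :: w, i), V⟩ ⟨q', some (u ++ w, i), V + spawnOf α i⟩
  | intr {q γ q' u w i V} :
      Rule.intr q γ q' u ∈ M.rules →
      Step M (.intr q γ q' u) ⟨q, some (γ :: w, i), V⟩
        ⟨q', none, V + Finsupp.single (u ++ w, i + 1) 1⟩
  | res {q γ q' w i V} :
      Rule.res q γ q' ∈ M.rules →
      Step M (.res q γ q') ⟨q, none, V + Finsupp.single (γ :: w, i) 1⟩ ⟨q', some (γ :: w, i), V⟩

/-- `c ∈ Conf_I(M)`: the active thread exists and its switch number lies in `I`. -/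
def ActiveIn {Q Γ : Type*} (I : Set ℕ) (c : Config Q Γ) : Prop :=
  ∃ w i, c.active = some (w, i) ∧ i ∈ I

/-- The `I`-bounded transition system `T_I(M)`. -/
def StepIn {Q Γ : Type*} (M : DCPS Q Γ) (I : Set ℕ) (r : Rule Q Γ) (c c' : Config Q Γ) : Prop :=
  Step M r c c' ∧ (ActiveIn I c ∨ ActiveIn I c')

/-- Reachability in `T(M)`. -/
def Reaches {Q Γ : Type*} (M : DCPS Q Γ) : Config Q Γ → Config Q Γ → Prop :=
  Relation.ReflTransGen (fun a b => ∃ r, Step M r a b)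

/-- Reachability in `T_I(M)`. -/
def ReachesIn {Q Γ : Type*} (M : DCPS Q Γ) (I : Set ℕ) : Config Q Γ → Config Q Γ → Prop :=
  Relation.ReflTransGen (fun a b => ∃ r, StepIn M I r a b)

/-- The initial configuration of a DCPS. -/
noncomputable def initConfig {Q Γ : Type*} (M : DCPS Q Γ) : Config Q Γ :=
  ⟨M.q0, none, Finsupp.single ([M.γ0], 0) 1⟩

/-- `q` is reachable by `M`. -/
def StateReachable {Q Γ : Type*} (M : DCPS Q Γ) (q : Q) : Prop :=
  ∃ c, Reaches M (initConfig M) c ∧ c.active = none ∧ c.state = q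

/-- `q` is `k`-bounded reachable by `M`. -/
def KBoundedReachable {Q Γ : Type*} (M : DCPS Q Γ) (k : ℕ) (q : Q) : Prop :=
  ∃ c, ReachesIn M {i | i ≤ k} (initConfig M) c ∧ c.active = none ∧ c.state = q

/-- `q` is `k`-stratified reachable by `M`. -/
def KStratifiedReachable {Q Γ : Type*} (M : DCPS Q Γ) (k : ℕ) (q : Q) : Prop :=
  ∃ c : ℕ → Config Q Γ, c 0 = initConfig M ∧
    (∀ l ≤ k, ReachesIn M {l} (c l) (c (l + 1))) ∧
    (c (k + 1)).active = none ∧ (c (k + 1)).state = q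

/-- A labelled run in a labelled transition system. -/
inductive LRun {C L : Type*} (step : L → C → C → Prop) : List L → C → C → Prop
  | nil (c) : LRun step [] c c
  | cons {l τ c c' c''} : step l c c' → LRun step τ c' c'' → LRun step (l :: τ) c c''

/-- A pushdown automaton with states `S`, input alphabet `A` and stack alphabet `Γ`. -/
structure PDA (S A Γ : Type*) where
  trans : Set ((S × Γ) × Option A × (S × List Γ))
  p0 : S
  γ0 : Γ
  final : Set S

/-- A single (possibly `ε`-labelled) step of a PDA. -/
inductive PDAStep {S A Γ : Type*} (P : PDA S A Γ) :
    Option A → (S × List Γ) → (S × List Γ) → Prop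
  | mk {p γ a p' u w} : ((p, γ), a, (p', u)) ∈ P.trans →
      PDAStep P a (p, γ :: w) (p', u ++ w)

/-- A run of a PDA labelled by the word obtained by concatenating all non-`ε` labels. -/
inductive PDATrace {S A Γ : Type*} (P : PDA S A Γ) :
    List A → (S × List Γ) → (S × List Γ) → Prop
  | nil (c) : PDATrace P [] c c
  | eps {v c c' c''} : PDAStep P none c c' → PDATrace P v c' c'' → PDATrace P v c c''
  | cons {a v c c' c''} : PDAStep P (some a) c c' → PDATrace P v c' c'' →
      PDATrace P (a :: v) c c''

/-- The language of a PDA (acceptance by final state). -/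
def PDALang {S A Γ : Type*} (P : PDA S A Γ) : Set (List A) :=
  { v | ∃ p w, p ∈ P.final ∧ PDATrace P v (P.p0, [P.γ0]) (p, w) }

/-- A finite state automaton. -/
structure FSA (S A : Type*) where
  trans : Set (S × Option A × S)
  init : Set S
  final : Set S

/-- A run of an FSA labelled by a word (`ε`-labels contribute nothing). -/
inductive FSARun {S A : Type*} (Au : FSA S A) : List A → S → S → Prop
  | nil (s) : FSARun Au [] s s
  | eps {v s s' s''} : (s, none, s') ∈ Au.trans → FSARun Au v s' s'' → FSARun Au v s s''
  | cons {a v s s' s''} : (s, some a, s') ∈ Au.trans → FSARun Au v s' s'' →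
      FSARun Au (a :: v) s s''

/-- The language of an FSA. -/
def FSALang {S A : Type*} (Au : FSA S A) : Set (List A) :=
  { v | ∃ s ∈ Au.init, ∃ s' ∈ Au.final, FSARun Au v s s' }

/-- A vector addition system with states of dimension `n`. -/
structure VASS (n : ℕ) (S A : Type*) where
  δ : S → A → S × (Fin n → ℤ)
  s0 : S
  v0 : Fin n → ℕ

/-- A step of a VASS: `(q₁,u₁) →ᵃ (q₂,u₂)` iff `δ(q₁,a) = (q₂, u₂ - u₁)`. -/
def VStep {n : ℕ} {S A : Type*} (V : VASS n S A) (a : A) :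
    (S × (Fin n → ℕ)) → (S × (Fin n → ℕ)) → Prop :=
  fun c c' => (V.δ c.1 a).1 = c'.1 ∧ ∀ i, (c'.2 i : ℤ) = (c.2 i : ℤ) + (V.δ c.1 a).2 i

/-- Reachability in the transition system of a VASS. -/
def VReaches {n : ℕ} {S A : Type*} (V : VASS n S A) :
    (S × (Fin n → ℕ)) → (S × (Fin n → ℕ)) → Prop :=
  Relation.ReflTransGen (fun c c' => ∃ a, VStep V a c c')

/-- A state `s` is reachable by the VASS `V`. -/
def VStateReachable {n : ℕ} {S A : Type*} (V : VASS n S A) (s : S) : Prop :=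
  ∃ u, VReaches V (V.s0, V.v0) (s, u)

/-- The `i`-th unit vector. -/
def unitVec {m : ℕ} (i : Fin m) : Fin m → ℤ := fun j => if j = i then 1 else 0

/-- States of the VASS constructed from a DCFS: either the halting state `p_halt`,
or a pair of a global state of the DCFS and the stack content of the active thread
(`none` = no active thread, `some w` with `w ∈ Γ ∪ {ε}` modelled as `Option Γ`). -/
inductive VState (Q Γ : Type*) where
  | halt : VState Q Γ
  | st : Q → Option (Option Γ) → VState Q Γ

/-- The counter coordinate associated with a stack content `w ∈ Γ ∪ {ε}`:
symbol `γ_j` gets coordinate `j` and `ε` gets the last coordinate. -/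
def coordOf {n : ℕ} : Option (Fin (n + 1)) → Fin (n + 2)
  | some γ => γ.castSucc
  | none => Fin.last (n + 1)

/-- The VASS constructed from a DCFS `M` over states `Q` and stack alphabet
`Γ = {γ₀,…,γ_n}` (modelled as `Fin (n+1)`); its dimension is `n + 2`, its alphabet is
the set of rules, and all remaining cases of the displacement function go to `p_halt`. -/
def vassOf {n : ℕ} {Q : Type*} [DecidableEq Q] (M : DCPS Q (Fin (n + 1)))
    [DecidablePred (· ∈ M.rules)] :
    VASS (n + 2) (VState Q (Fin (n + 1))) (Rule Q (Fin (n + 1))) where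
  δ := fun s t =>
    match s, t with
    | .st q (some (some γ)), .cr q₁ γ₁ q' u α =>
        if Rule.cr q₁ γ₁ q' u α ∈ M.rules ∧ q₁ = q ∧ γ₁ = γ then
          (.st q' (some u.head?),
            match α with
            | none => 0
            | some a => unitVec (coordOf (some a)))
        else (.halt, 0)
    | .st q (some (some γ)), .intr q₁ γ₁ q' u =>
        if Rule.intr q₁ γ₁ q' u ∈ M.rules ∧ q₁ = q ∧ γ₁ = γ then
          (.st q' none, unitVec (coordOf u.head?))
        else (.halt, 0)
    | .st q none, .res q₁ γ q' =>
        if Rule.res q₁ γ q' ∈ M.rules ∧ q₁ = q then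
          (.st q' (some (some γ)), - unitVec (coordOf (some γ)))
        else (.halt, 0)
    | _, _ => (.halt, 0)
  s0 := .st M.q0 none
  v0 := fun i => if i = coordOf (some M.γ0) then 1 else 0

/-- The number of pending threads of a configuration with a given stack content
(summed over all switch numbers). -/
noncomputable def countStack {Q Γ : Type*} [DecidableEq Γ] (c : Config Q Γ)
    (w : List Γ) : ℕ :=
  c.idle.sum fun loc m => if loc.1 = w then m else 0

/-- The simulation map `μ` from configurations of the DCFS `M` to configurations
of the VASS constructed from `M`. -/
noncomputable def muV {Q : Type*} {n : ℕ} (c : Config Q (Fin (n + 1))) :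
    VState Q (Fin (n + 1)) × (Fin (n + 2) → ℕ) :=
  ((match c.active with
    | none => .st c.state none
    | some (w, _) => .st c.state (some w.head?)),
   fun i => if h : (i : ℕ) < n + 1 then countStack c [⟨(i : ℕ), h⟩] else countStack c [])

noncomputable def cntAux {n : ℕ} (V : (List (Fin (n + 1)) × ℕ) →₀ ℕ) (i : Fin (n + 2)) : ℕ :=
  if h : (i : ℕ) < n + 1 then
    V.sum (fun loc m => if loc.1 = [(⟨(i : ℕ), h⟩ : Fin (n + 1))] then m else 0)
  else V.sum (fun loc m => if loc.1 = [] then m else 0)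

lemma cntAux_add {n : ℕ} (V W : (List (Fin (n + 1)) × ℕ) →₀ ℕ) (i : Fin (n + 2)) :
    cntAux (V + W) i = cntAux V i + cntAux W i := by
  unfold cntAux
  split_ifs
  all_goals
    apply Finsupp.sum_add_index'
    · intro a; simp
    · intro a b c; split_ifs <;> simp

lemma cntAux_single {n : ℕ} (w : List (Fin (n + 1))) (hw : w.length ≤ 1) (j : ℕ)
    (i : Fin (n + 2)) :
    cntAux (Finsupp.single (w, j) 1) i = if i = coordOf w.head? then 1 else 0 := by
  unfold cntAux
  rcases w with _ | ⟨a, _ | ⟨b, w⟩⟩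
  · split_ifs with h h2 h2
    · simp [coordOf, Fin.ext_iff] at h2; omega
    · rw [Finsupp.sum_single_index] <;> simp
    · rw [Finsupp.sum_single_index] <;> simp
    · simp [coordOf, Fin.ext_iff] at h2; omega
  · split_ifs with h h2 h2
    · rw [Finsupp.sum_single_index] <;> simp [coordOf, Fin.ext_iff] at *; omega
    · rw [Finsupp.sum_single_index] <;> simp [coordOf, Fin.ext_iff] at *; omega
    · simp [coordOf, Fin.ext_iff] at h2; omega
    · rw [Finsupp.sum_single_index] <;> simp
  · simp at hw

lemma cntAux_pos {n : ℕ} (V : (List (Fin (n + 1)) × ℕ) →₀ ℕ) (γ : Fin (n + 1))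
    (h : cntAux V (coordOf (some γ)) ≠ 0) :
    ∃ j W, V = W + Finsupp.single ([γ], j) 1 := by
  have hlt : ((coordOf (some γ) : Fin (n + 2)) : ℕ) < n + 1 := by simp [coordOf]; omega
  unfold cntAux at h
  rw [dif_pos hlt] at h
  obtain ⟨⟨w, j⟩, hm, hne⟩ := Finset.exists_ne_zero_of_sum_ne_zero h
  have hw : w = [γ] := by
    by_contra hc
    apply hne
    simp only
    rw [if_neg]
    simpa [coordOf] using hc
  subst hw
  refine ⟨j, V - Finsupp.single ([γ], j) 1, ?_⟩
  rw [tsub_add_cancel_of_le]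
  rw [Finsupp.single_le_iff]
  exact Nat.one_le_iff_ne_zero.mpr (Finsupp.mem_support_iff.mp hm)

lemma muV_snd {Q : Type*} {n : ℕ} (c : Config Q (Fin (n + 1))) (i : Fin (n + 2)) :
    (muV c).2 i = cntAux c.idle i := rfl

lemma step_sim (n : ℕ) (Q : Type) [DecidableEq Q]
    (M : DCPS Q (Fin (n + 1))) [DecidablePred (· ∈ M.rules)] (hdcfs : IsDCFS M)
    (t : Rule Q (Fin (n + 1))) (c : Config Q (Fin (n + 1)))
    (hc : ∀ w i, c.active = some (w, i) → w.length ≤ 1)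
    (ς : VState Q (Fin (n + 1)) × (Fin (n + 2) → ℕ))
    (hs : VStep (vassOf M) t (muV c) ς) (hh : ς.1 ≠ .halt) :
    ∃ c', Step M t c c' ∧ muV c' = ς ∧ ∀ w i, c'.active = some (w, i) → w.length ≤ 1 := by
  obtain ⟨q, act, V⟩ := c
  obtain ⟨s, u⟩ := ς
  obtain ⟨h1, h2⟩ := hs
  simp only [muV_snd] at h1 h2
  simp only at hh hc
  rcases act with _ | ⟨w, i⟩
  · cases t with
    | cr => exact absurd h1.symm hh
    | intr => exact absurd h1.symm hh
    | res q₁ γ q' =>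
      simp only [muV, vassOf] at h1 h2
      split_ifs at h1 h2 with hr
      · obtain ⟨hr, rfl⟩ := hr
        have hpos : cntAux V (coordOf (some γ)) ≠ 0 := by
          have := h2 (coordOf (some γ))
          simp [unitVec] at this
          omega
        obtain ⟨j, W, rfl⟩ := cntAux_pos V γ hpos
        refine ⟨_, Step.res hr, ?_, ?_⟩
        · refine Prod.ext ?_ (funext fun k => ?_)
          · simpa [muV] using h1
          · have := h2 k
            rw [cntAux_add, cntAux_single _ (by simp)] at this
            rw [muV_snd]
            simp only [Pi.neg_apply, unitVec, List.head?_cons] at this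
            by_cases hk : k = coordOf (some γ) <;> simp only [hk, if_true, if_false] at this ⊢ <;>
              push_cast at this <;> omega
        · rintro w i h
          simp at h
          simp [← h.1]
      · exact absurd h1.symm hh
  · have hw := hc w i rfl
    rcases w with _ | ⟨γ, _ | ⟨b, w⟩⟩
    · exact absurd (by cases t <;> exact h1.symm) hh
    · cases t with
      | res => exact absurd h1.symm hh
      | cr q₁ γ₁ q' x α =>
        simp only [muV, vassOf, List.head?_cons] at h1 h2
        split_ifs at h1 h2 with hr
        · obtain ⟨hr, rfl, rfl⟩ := hr
          have hx : x.length ≤ 1 := hdcfs _ hr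
          refine ⟨_, Step.cr hr, ?_, ?_⟩
          · refine Prod.ext ?_ (funext fun k => ?_)
            · simpa [muV] using h1
            · have := h2 k
              rw [muV_snd]
              simp only [cntAux_add]
              cases α with
              | none =>
                have h0 : cntAux (spawnOf (none : Option (Fin (n+1))) i) k = 0 := by
                  simp [cntAux, spawnOf]
                simp at this
                omega
              | some a =>
                simp only [spawnOf]
                rw [cntAux_single _ (by simp)]
                simp only [unitVec, List.head?_cons] at this ⊢
                by_cases hk : k = coordOf (some a) <;>
                  simp only [hk, if_true, if_false] at this ⊢ <;> omega
          · rintro w i h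
            simp at h
            simpa [← h.1] using hx
        · exact absurd h1.symm hh
      | intr q₁ γ₁ q' x =>
        simp only [muV, vassOf, List.head?_cons] at h1 h2
        split_ifs at h1 h2 with hr
        · obtain ⟨hr, rfl, rfl⟩ := hr
          have hx : x.length ≤ 1 := hdcfs _ hr
          refine ⟨_, Step.intr hr, ?_, ?_⟩
          · refine Prod.ext ?_ (funext fun k => ?_)
            · simpa [muV] using h1
            · have := h2 k
              rw [muV_snd]
              simp only [cntAux_add, List.append_nil]
              rw [cntAux_single _ hx]
              simp only [unitVec] at this ⊢
              split_ifs at this ⊢ <;> omega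
          · rintro w i h
            simp at h
        · exact absurd h1.symm hh
    · simp at hw

lemma halt_run (n : ℕ) (Q : Type) [DecidableEq Q]
    (M : DCPS Q (Fin (n + 1))) [DecidablePred (· ∈ M.rules)]
    (τ : List (Rule Q (Fin (n + 1))))
    (a b : VState Q (Fin (n + 1)) × (Fin (n + 2) → ℕ))
    (hrun : LRun (VStep (vassOf M)) τ a b) (ha : a.1 = .halt) : b.1 = .halt := by
  induction hrun with
  | nil => exact ha
  | cons h _ ih =>
    apply ih
    rw [← h.1, ha]
    rfl

lemma run_sim (n : ℕ) (Q : Type) [DecidableEq Q]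
    (M : DCPS Q (Fin (n + 1))) [DecidablePred (· ∈ M.rules)] (hdcfs : IsDCFS M)
    (τ : List (Rule Q (Fin (n + 1))))
    (a b : VState Q (Fin (n + 1)) × (Fin (n + 2) → ℕ))
    (hrun : LRun (VStep (vassOf M)) τ a b) (hb : b.1 ≠ .halt) :
    ∀ c : Config Q (Fin (n + 1)), muV c = a →
      (∀ w i, c.active = some (w, i) → w.length ≤ 1) →
      ∃ c', muV c' = b ∧ LRun (Step M) τ c c' := by
  induction hrun with
  | nil => exact fun c h _ => ⟨c, h, LRun.nil c⟩
  | cons h hr ih =>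
    rintro c rfl hc
    obtain ⟨c', hs, hm, hc'⟩ := step_sim n Q M hdcfs _ c hc _ h
      (fun hh => hb (halt_run n Q M _ _ _ hr hh))
    obtain ⟨d, hd, hl⟩ := ih hb c' hm hc'
    exact ⟨d, hd, LRun.cons hs hl⟩

/-- Every run of the constructed VASS labelled by a word `τ` that does
not end in `p_halt` is simulated by a run of the DCFS `M` labelled by the same word,
ending in a configuration `c` with `μ(c) = ς`. -/
theorem dcfs_simulates_vass
    (n : ℕ) (Q : Type) [Fintype Q] [DecidableEq Q]
    (M : DCPS Q (Fin (n + 1))) [DecidablePred (· ∈ M.rules)]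
    (hfin : M.rules.Finite) (hdcfs : IsDCFS M)
    (τ : List (Rule Q (Fin (n + 1))))
    (ς : VState Q (Fin (n + 1)) × (Fin (n + 2) → ℕ))
    (hrun : LRun (VStep (vassOf M)) τ ((vassOf M).s0, (vassOf M).v0) ς)
    (hnothalt : ς.1 ≠ .halt) :
    ∃ c : Config Q (Fin (n + 1)), muV c = ς ∧ LRun (Step M) τ (initConfig M) c := by
  apply run_sim n Q M hdcfs τ _ _ hrun hnothalt
  · refine Prod.ext rfl (funext fun k => ?_)
    rw [muV_snd]
    exact cntAux_single [M.γ0] (by simp) 0 k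
  · intro w i h
    simp [initConfig] at h

end DCPSFormal
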